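/- Let R be a ring, N a finitely presented left R-module with presentation R^{1×m} →^A R^{1×n} → N → 0, and let N' be its Auslander transpose, the cokernel of Hom(A, R) : R^{n×1} → R^{m×1}. Then there is an exact sequence 0 → Ext¹(N', R) → N → Hom(Hom(N, R), R) → Ext²(N', R) → 0, where the middle map is the natural evaluation map. -/

import Mathlib

open CategoryTheory

section

variable (R : Type) [Ring R]

/-- The left `R`-module map `R^{1×m} → R^{1×n}`, `x ↦ x·A`. -/
def rowMulLinear {m n : ℕ} (A : Matrix (Fin m) (Fin n) R) :
    (Fin m → R) →ₗ[R] (Fin n → R) where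
  toFun x := fun j => ∑ i, x i * A i j
  map_add' x y := by
    funext j
    simp [add_mul, Finset.sum_add_distrib]
  map_smul' r x := by
    funext j
    simp [Finset.mul_sum, mul_assoc]

/-- The right `R`-module map `R^{n×1} → R^{m×1}`, `x ↦ A·x`, i.e. `Hom(A, R)`. -/
def colMulLinear {m n : ℕ} (A : Matrix (Fin m) (Fin n) R) :
    (Fin n → R) →ₗ[Rᵐᵒᵖ] (Fin m → R) where
  toFun x := fun i => ∑ j, A i j * x j
  map_add' x y := by
    funext i
    simp [mul_add, Finset.sum_add_distrib]
  map_smul' c x := by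
    funext i
    simp [MulOpposite.smul_eq_mul_unop, Finset.sum_mul, mul_assoc]

/-- The natural evaluation map `X → Hom_{Rᵒᵖ}(Hom_R(X, R), R)`, `x ↦ (φ ↦ φ(x))`,
as a homomorphism of abelian groups. -/
def evalHom (X : Type) [AddCommGroup X] [Module R X] :
    X →+ ((X →ₗ[R] R) →ₗ[Rᵐᵒᵖ] R) :=
  AddMonoidHom.mk'
    (fun x =>
      { toFun := fun φ => φ x
        map_add' := fun φ ψ => rfl
        map_smul' := fun c φ => rfl })
    (fun x y => by ext φ; exact φ.map_add x y)

end

open CategoryTheory.Limits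

section
variable {C : Type*} [Category* C] [Abelian C] [EnoughProjectives C]

noncomputable def mySucc {X₀ X₁ : C} (f : X₁ ⟶ X₀) : Σ' (X₂ : C) (d : X₂ ⟶ X₁), d ≫ f = 0 :=
  ⟨Projective.syzygies f, Projective.d f,
    (Category.assoc (Projective.π (kernel f)) (kernel.ι f) f).trans
      ((congrArg (fun t => Projective.π (kernel f) ≫ t) (kernel.condition f)).trans comp_zero)⟩

noncomputable def myCx {X₀ X₁ : C} (f : X₁ ⟶ X₀) : ChainComplex C ℕ :=
  ChainComplex.mk' X₀ X₁ f mySucc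

lemma myCx_d10 {X₀ X₁ : C} (f : X₁ ⟶ X₀) : (myCx f).d 1 0 = f := ChainComplex.mk'_d_1_0 ..

lemma myCx_exact {X₀ X₁ : C} (f : X₁ ⟶ X₀) (n : ℕ) : (myCx f).ExactAt (n + 1) := by
  rw [HomologicalComplex.exactAt_iff' _ (n + 1 + 1) (n + 1) n (by simp) (by simp)]
  have h := ChainComplex.mk'_d X₀ X₁ f mySucc n
  refine (ShortComplex.exact_iff_of_iso ?_).2 (exact_d_f ((myCx f).d (n + 1) n))
  exact ShortComplex.isoMk (ChainComplex.mk'XIso X₀ X₁ f mySucc n) (Iso.refl _) (Iso.refl _)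
    (by exact h.symm.trans (Category.comp_id _).symm) ((Category.id_comp _).trans (Category.comp_id _).symm)

lemma myCx_proj {X₀ X₁ : C} [Projective X₀] [Projective X₁] (f : X₁ ⟶ X₀) (n : ℕ) :
    Projective ((myCx f).X n) := by
  obtain (_ | _ | n) := n
  · assumption
  · assumption
  · exact Projective.of_iso (ChainComplex.mk'XIso X₀ X₁ f mySucc n).symm (Projective.projective_over _)

noncomputable def myRes {X₀ X₁ Z : C} [Projective X₀] [Projective X₁] (f : X₁ ⟶ X₀) (g : X₀ ⟶ Z)
    (w : f ≫ g = 0) (hex : (ShortComplex.mk f g w).Exact) [Epi g] : ProjectiveResolution Z where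
  complex := myCx f
  projective := myCx_proj f
  π := (ChainComplex.toSingle₀Equiv _ _).symm ⟨g, by rw [myCx_d10]; exact w⟩
  quasiIso := ⟨fun n => by
    cases n
    · rw [ChainComplex.quasiIsoAt₀_iff, ShortComplex.quasiIso_iff_of_zeros']
      · refine (ShortComplex.exact_and_epi_g_iff_of_iso ?_).2
          ⟨hex, by assumption⟩
        refine ShortComplex.isoMk (Iso.refl _) (Iso.refl _) (Iso.refl _) ?_ ?_
        · exact (Category.id_comp _).trans ((myCx_d10 f).symm.trans (Category.comp_id _).symm)
        · refine (Category.id_comp _).trans (Eq.trans ?_ (Category.comp_id _).symm)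
          exact (ChainComplex.toSingle₀Equiv_symm_apply_f_zero (C := myCx f) g _).symm
      all_goals rfl
    · rw [quasiIsoAt_iff_exactAt']
      · apply myCx_exact
      · apply ChainComplex.exactAt_succ_single_obj⟩
end

lemma homology_data_sc {k : Type} [Ring k] (S : ShortComplex (ModuleCat.{0} k)) :
    ∃ q : LinearMap.ker S.g.hom →ₗ[k] S.homology,
      Function.Surjective q ∧ ∀ z, q z = 0 ↔ ∃ y, S.f.hom y = z.1 := by
  let e' := S.moduleCatHomologyIso
  refine ⟨e'.toLinearEquiv.symm.toLinearMap ∘ₗ (LinearMap.range S.moduleCatToCycles).mkQ, ?_, ?_⟩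
  · exact e'.toLinearEquiv.symm.surjective.comp (Submodule.mkQ_surjective _)
  · intro z
    refine (e'.toLinearEquiv.symm.map_eq_zero_iff).trans ?_
    refine (Submodule.Quotient.mk_eq_zero _).trans ?_
    constructor
    · rintro ⟨y, hy⟩
      exact ⟨y, congrArg Subtype.val hy⟩
    · rintro ⟨y, hy⟩
      exact ⟨y, Subtype.ext hy⟩

lemma homology_data {k : Type} [Ring k] (K : CochainComplex (ModuleCat.{0} k) ℕ) (n : ℕ) :
    ∃ q : LinearMap.ker (K.d (n + 1) (n + 2)).hom →ₗ[k] K.homology (n + 1),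
      Function.Surjective q ∧ ∀ z, q z = 0 ↔ ∃ y, (K.d n (n + 1)).hom y = z.1 := by
  obtain ⟨q, hq, hq'⟩ : ∃ q : LinearMap.ker (K.d (n + 1) (n + 2)).hom →ₗ[k]
      (K.sc' n (n + 1) (n + 2)).homology,
      Function.Surjective q ∧ ∀ z, q z = 0 ↔ ∃ y, (K.d n (n + 1)).hom y = z.1 :=
    homology_data_sc (K.sc' n (n + 1) (n + 2))
  let e : K.homology (n + 1) ≅ (K.sc' n (n + 1) (n + 2)).homology :=
    ShortComplex.homologyMapIso (K.isoSc' n (n + 1) (n + 2) (by simp) (by simp))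
  refine ⟨e.toLinearEquiv.symm.toLinearMap ∘ₗ q, ?_, fun z => ?_⟩
  · exact e.toLinearEquiv.symm.surjective.comp hq
  · exact (e.toLinearEquiv.symm.map_eq_zero_iff).trans (hq' z)

/-- maps killed by precomposition with `d`. -/
def coc {S : Type} [Ring S] {P Q : Type} [AddCommGroup P] [AddCommGroup Q] [Module S P] [Module S Q]
    (d : P →ₗ[S] Q) (Y : Type) [AddCommGroup Y] [Module S Y] : AddSubgroup (Q →ₗ[S] Y) where
  carrier := {f | f ∘ₗ d = 0}
  add_mem' := fun {f g} hf hg => by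
    change (f + g) ∘ₗ d = 0
    rw [LinearMap.add_comp, show f ∘ₗ d = 0 from hf, show g ∘ₗ d = 0 from hg, add_zero]
  zero_mem' := LinearMap.zero_comp _
  neg_mem' := fun {f} hf => by
    change (-f) ∘ₗ d = 0
    rw [LinearMap.neg_comp, show f ∘ₗ d = 0 from hf, neg_zero]

lemma ext_data_res {S : Type} [Ring S] {X : ModuleCat.{0} S} (P : ProjectiveResolution X)
    (Y : ModuleCat.{0} S) (n : ℕ) :
    ∃ q : coc (P.complex.d (n + 2) (n + 1)).hom Y →+
        ((Ext ℤ (ModuleCat.{0} S) (n + 1)).obj (Opposite.op X)).obj Y,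
      Function.Surjective q ∧
        ∀ z, q z = 0 ↔ ∃ y : P.complex.X n →ₗ[S] Y, y ∘ₗ (P.complex.d (n + 1) n).hom = z.1 := by
  obtain ⟨q, hq, hq'⟩ := homology_data (P.complex.linearYonedaObj ℤ Y) n
  let e := (P.isoExt (R := ℤ) (n + 1) Y).toLinearEquiv
  let K := P.complex.linearYonedaObj ℤ Y
  let t : coc (P.complex.d (n + 2) (n + 1)).hom Y →+ LinearMap.ker (K.d (n + 1) (n + 2)).hom :=
    { toFun := fun f => ⟨(ModuleCat.ofHom f.1 : P.complex.X (n + 1) ⟶ Y),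
        ModuleCat.hom_ext f.2⟩
      map_zero' := rfl
      map_add' := fun _ _ => rfl }
  have ht : Function.Surjective t := fun g =>
    ⟨⟨ModuleCat.Hom.hom (show P.complex.X (n + 1) ⟶ Y from g.1),
      congrArg ModuleCat.Hom.hom (show P.complex.d (n + 2) (n + 1) ≫
        (show P.complex.X (n + 1) ⟶ Y from g.1) = 0 from g.2)⟩, rfl⟩
  refine ⟨e.symm.toLinearMap.toAddMonoidHom.comp (q.toAddMonoidHom.comp t), ?_, ?_⟩
  · exact e.symm.surjective.comp (hq.comp ht)
  · intro z
    refine (e.symm.map_eq_zero_iff).trans ((hq' (t z)).trans ?_)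
    constructor
    · rintro ⟨y, hy⟩
      exact ⟨ModuleCat.Hom.hom (show P.complex.X n ⟶ Y from y),
        congrArg ModuleCat.Hom.hom (show P.complex.d (n + 1) n ≫ (show P.complex.X n ⟶ Y from y) =
          ModuleCat.ofHom z.1 from hy)⟩
    · rintro ⟨y, hy⟩
      exact ⟨(ModuleCat.ofHom y : P.complex.X n ⟶ Y), ModuleCat.hom_ext hy⟩

lemma ext_data {S : Type} [Ring S] {M₀ M₁ : Type} [AddCommGroup M₀] [AddCommGroup M₁]
    [Module S M₀] [Module S M₁] [Module.Projective S M₀] [Module.Projective S M₁]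
    (d : M₁ →ₗ[S] M₀) (Y : ModuleCat.{0} S) :
    ∃ (P₂ P₃ : ModuleCat.{0} S) (d₂ : P₂ →ₗ[S] M₁) (d₃ : P₃ →ₗ[S] P₂)
      (q₁ : coc d₂ Y →+ ((Ext ℤ (ModuleCat.{0} S) 1).obj
        (Opposite.op (ModuleCat.of S (M₀ ⧸ LinearMap.range d)))).obj Y)
      (q₂ : coc d₃ Y →+ ((Ext ℤ (ModuleCat.{0} S) 2).obj
        (Opposite.op (ModuleCat.of S (M₀ ⧸ LinearMap.range d)))).obj Y),
      LinearMap.range d₂ = LinearMap.ker d ∧ LinearMap.range d₃ = LinearMap.ker d₂ ∧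
      Function.Surjective q₁ ∧ (∀ z, q₁ z = 0 ↔ ∃ y : M₀ →ₗ[S] Y, y ∘ₗ d = z.1) ∧
      Function.Surjective q₂ ∧ (∀ z, q₂ z = 0 ↔ ∃ y : M₁ →ₗ[S] Y, y ∘ₗ d₂ = z.1) := by
  have h0 : Projective (ModuleCat.of S M₀) := ModuleCat.projective_of_categoryTheory_projective _
  have h1 : Projective (ModuleCat.of S M₁) := ModuleCat.projective_of_categoryTheory_projective _
  have hepi : Epi (ModuleCat.ofHom (LinearMap.range d).mkQ) :=
    (ModuleCat.epi_iff_surjective _).2 (Submodule.mkQ_surjective _)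
  let P := myRes (ModuleCat.ofHom d) (ModuleCat.ofHom (LinearMap.range d).mkQ)
    (ModuleCat.hom_ext (LinearMap.range_mkQ_comp d)) (by
      rw [ShortComplex.moduleCat_exact_iff_range_eq_ker]
      exact (Submodule.ker_mkQ _).symm)
  have hd : P.complex.d 1 0 = ModuleCat.ofHom d := myCx_d10 _
  have hd' : (P.complex.d 1 0).hom = d := congrArg ModuleCat.Hom.hom hd
  obtain ⟨q₁, a1, b1⟩ := ext_data_res P Y 0
  obtain ⟨q₂, a2, b2⟩ := ext_data_res P Y 1
  refine ⟨P.complex.X 2, P.complex.X 3, (P.complex.d 2 1).hom, (P.complex.d 3 2).hom, q₁, q₂,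
    ?_, ?_, a1, ?_, a2, b2⟩
  · exact ((P.exact_succ 0).moduleCat_range_eq_ker).trans (congrArg LinearMap.ker hd')
  · exact (P.exact_succ 1).moduleCat_range_eq_ker
  · intro z
    refine (b1 z).trans ?_
    constructor
    · rintro ⟨y, hy⟩
      exact ⟨y, (congrArg (fun t => y ∘ₗ t) hd').symm.trans hy⟩
    · rintro ⟨y, hy⟩
      exact ⟨y, (congrArg (fun t => y ∘ₗ t) hd').trans hy⟩

lemma lift_inj {G E N : Type*} [AddCommGroup G] [AddCommGroup E] [AddCommGroup N]
    (q : G →+ E) (t : G →+ N) (hq : Function.Surjective q) (h : ∀ g, q g = 0 ↔ t g = 0) :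
    ∃ ι : E →+ N, Function.Injective ι ∧ Set.range ι = Set.range t := by
  have hle : q.ker ≤ t.ker := fun g hg => (h g).1 hg
  let ι := q.liftOfSurjective hq ⟨t, hle⟩
  have hι : ∀ g, ι (q g) = t g := fun g =>
    q.liftOfRightInverse_comp_apply _ (Function.rightInverse_surjInv hq) ⟨t, hle⟩ g
  refine ⟨ι, ?_, ?_⟩
  · rw [injective_iff_map_eq_zero]
    intro e he
    obtain ⟨g, rfl⟩ := hq e
    rw [hι] at he
    exact (h g).2 he
  · ext x
    constructor
    · rintro ⟨e, rfl⟩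
      obtain ⟨g, rfl⟩ := hq e
      exact ⟨g, (hι g).symm⟩
    · rintro ⟨g, rfl⟩
      exact ⟨q g, hι g⟩

section
variable {R : Type} [Ring R]

instance projOp (n : ℕ) : Module.Projective Rᵐᵒᵖ (Fin n → R) := by
  let e : Rᵐᵒᵖ ≃ₗ[Rᵐᵒᵖ] R :=
    { MulOpposite.opAddEquiv.symm with map_smul' := fun c x => rfl }
  have h : Module.Projective Rᵐᵒᵖ (Fin n → Rᵐᵒᵖ) :=
    Module.Projective.of_basis (Pi.basisFun Rᵐᵒᵖ (Fin n))
  exact Module.Projective.of_equiv (LinearEquiv.piCongrRight fun _ : Fin n => e)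

/-- row vector as a functional on columns -/
def dotL {n : ℕ} (v : Fin n → R) : (Fin n → R) →ₗ[Rᵐᵒᵖ] R where
  toFun x := ∑ j, v j * x j
  map_add' x y := by simp [mul_add, Finset.sum_add_distrib]
  map_smul' c x := by simp [MulOpposite.smul_eq_mul_unop, Finset.sum_mul, mul_assoc]

/-- column vector as a functional on rows -/
def dotR {n : ℕ} (u : Fin n → R) : (Fin n → R) →ₗ[R] R where
  toFun x := ∑ j, x j * u j
  map_add' x y := by simp [add_mul, Finset.sum_add_distrib]
  map_smul' c x := by simp [Finset.mul_sum, mul_assoc]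

/-- coordinates of a functional -/
def rowOf {n : ℕ} (f : (Fin n → R) →ₗ[Rᵐᵒᵖ] R) : Fin n → R := fun j => f (Pi.single j 1)

lemma dotL_rowOf {n : ℕ} (f : (Fin n → R) →ₗ[Rᵐᵒᵖ] R) : dotL (rowOf f) = f := by
  refine LinearMap.ext fun x => ?_
  have hx : x = ∑ j, MulOpposite.op (x j) • (Pi.single j 1 : Fin n → R) := by
    funext i
    simp [Finset.sum_apply, Pi.single_apply]
  conv_rhs => rw [hx, map_sum]
  simp [dotL, rowOf, MulOpposite.smul_eq_mul_unop]

lemma rowOf_dotL {n : ℕ} (v : Fin n → R) : rowOf (dotL v) = v := by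
  funext j
  simp [dotL, rowOf, Pi.single_apply]

lemma dotR_col {n : ℕ} (f : (Fin n → R) →ₗ[R] R) : dotR (fun j => f (Pi.single j 1)) = f := by
  ext j
  simp [dotR, Pi.single_apply]

variable {m n : ℕ} (A : Matrix (Fin m) (Fin n) R)

lemma dot_assoc (v : Fin m → R) (u : Fin n → R) :
    ∑ j, rowMulLinear R A v j * u j = ∑ i, v i * colMulLinear R A u i := by
  simp only [rowMulLinear, colMulLinear, LinearMap.coe_mk, AddHom.coe_mk, Finset.sum_mul,
    Finset.mul_sum, mul_assoc]
  exact Finset.sum_comm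

lemma rowOf_comp (y : (Fin m → R) →ₗ[Rᵐᵒᵖ] R) :
    rowOf (y ∘ₗ colMulLinear R A) = rowMulLinear R A (rowOf y) := by
  rw [← rowOf_dotL (rowMulLinear R A (rowOf y))]
  congr 1
  refine LinearMap.ext fun x => ?_
  conv_lhs => rw [← dotL_rowOf y]
  exact (dot_assoc A (rowOf y) x).symm

/-- kernel of the column map gives functionals on `N` -/
def kap : LinearMap.ker (colMulLinear R A) →ₗ[Rᵐᵒᵖ]
    (((Fin n → R) ⧸ LinearMap.range (rowMulLinear R A)) →ₗ[R] R) where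
  toFun u := (LinearMap.range (rowMulLinear R A)).liftQ (dotR u.1) (by
    rintro _ ⟨v, rfl⟩
    have h : colMulLinear R A u.1 = 0 := u.2
    have := dot_assoc A v u.1
    rw [h] at this
    simpa [dotR] using this)
  map_add' u w := by
    apply Submodule.linearMap_qext
    ext v
    simp [dotR, mul_add, Finset.sum_add_distrib]
  map_smul' c u := by
    apply Submodule.linearMap_qext
    ext v
    simp [dotR, MulOpposite.smul_eq_mul_unop, Finset.sum_mul, mul_assoc]

lemma kap_mk (u : LinearMap.ker (colMulLinear R A)) (v : Fin n → R) :
    kap A u (Submodule.Quotient.mk v) = ∑ j, v j * u.1 j := rfl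

lemma kap_bij : Function.Bijective (kap A) := by
  constructor
  · rw [injective_iff_map_eq_zero]
    intro u hu
    ext j
    have := kap_mk A u (Pi.single j 1)
    rw [hu] at this
    simpa [Pi.single_apply] using this.symm
  · intro φ
    let f := φ ∘ₗ (LinearMap.range (rowMulLinear R A)).mkQ
    let u : Fin n → R := fun j => f (Pi.single j 1)
    have hf : dotR u = f := dotR_col f
    have hu : colMulLinear R A u = 0 := by
      funext i
      have h1 := dot_assoc A (Pi.single i 1) u
      have h2 : ∑ j, rowMulLinear R A (Pi.single i 1) j * u j
          = f (rowMulLinear R A (Pi.single i 1)) := by rw [← hf]; rfl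
      have h3 : f (rowMulLinear R A (Pi.single i 1)) = 0 := by
        have : (LinearMap.range (rowMulLinear R A)).mkQ (rowMulLinear R A (Pi.single i 1)) = 0 :=
          (Submodule.Quotient.mk_eq_zero _).2 ⟨_, rfl⟩
        simp only [f, LinearMap.comp_apply, this, map_zero]
      rw [h2, h3] at h1
      simpa [Pi.single_apply] using h1.symm
    refine ⟨⟨u, hu⟩, ?_⟩
    apply Submodule.linearMap_qext
    exact hf
end

/-- **Auslander's exact sequence.**  Let `N` be the finitely presented left `R`-module
presented by `R^{1×m} →^A R^{1×n} → N → 0` and let `N'` be its Auslander transpose,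
the cokernel of `Hom(A, R) : R^{n×1} → R^{m×1}`.  Then there is an exact sequence
`0 → Ext¹(N', R) → N → Hom(Hom(N, R), R) → Ext²(N', R) → 0`
whose middle map is the natural evaluation map. -/
theorem auslander_exact_sequence (R : Type) [Ring R] (m n : ℕ)
    (A : Matrix (Fin m) (Fin n) R) :
    ∃ (ι : (((Ext ℤ (ModuleCat.{0} Rᵐᵒᵖ) 1).obj
              (Opposite.op (ModuleCat.of Rᵐᵒᵖ
                ((Fin m → R) ⧸ LinearMap.range (colMulLinear R A))))).obj
              (ModuleCat.of Rᵐᵒᵖ R)) →+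
            ((Fin n → R) ⧸ LinearMap.range (rowMulLinear R A)))
      (π : ((((Fin n → R) ⧸ LinearMap.range (rowMulLinear R A)) →ₗ[R] R) →ₗ[Rᵐᵒᵖ] R) →+
            (((Ext ℤ (ModuleCat.{0} Rᵐᵒᵖ) 2).obj
              (Opposite.op (ModuleCat.of Rᵐᵒᵖ
                ((Fin m → R) ⧸ LinearMap.range (colMulLinear R A))))).obj
              (ModuleCat.of Rᵐᵒᵖ R))),
      Function.Injective ι ∧
      (∀ x, evalHom R ((Fin n → R) ⧸ LinearMap.range (rowMulLinear R A)) x = 0 ↔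
        x ∈ Set.range ι) ∧
      (∀ d, π d = 0 ↔
        d ∈ Set.range (evalHom R ((Fin n → R) ⧸ LinearMap.range (rowMulLinear R A)))) ∧
      Function.Surjective π := by
  obtain ⟨P₂, P₃, d₂, d₃, q₁, q₂, hr₂, hr₃, hs₁, hk₁, hs₂, hk₂⟩ :=
    ext_data (colMulLinear R A) (ModuleCat.of Rᵐᵒᵖ R)
  have hmem : ∀ p, d₂ p ∈ LinearMap.ker (colMulLinear R A) := fun p => by
    rw [← hr₂]
    exact ⟨p, rfl⟩
  have hlift : ∀ u : LinearMap.ker (colMulLinear R A), ∃ p, d₂ p = u.1 := fun u => by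
    have h : u.1 ∈ LinearMap.range d₂ := by
      rw [hr₂]
      exact u.2
    exact h
  let t₁ : coc d₂ R →+ ((Fin n → R) ⧸ LinearMap.range (rowMulLinear R A)) :=
    { toFun := fun f => Submodule.Quotient.mk (rowOf f.1)
      map_zero' := rfl
      map_add' := fun _ _ => rfl }
  obtain ⟨ι, hι, hιr⟩ := lift_inj q₁ t₁ hs₁ (fun f => by
    refine (hk₁ f).trans (Iff.trans ?_ (Submodule.Quotient.mk_eq_zero _).symm)
    constructor
    · rintro ⟨y, hy⟩
      refine ⟨rowOf y, ?_⟩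
      rw [← rowOf_comp]
      exact congrArg rowOf hy
    · rintro ⟨v, hv⟩
      refine ⟨dotL v, ?_⟩
      have h : rowOf (dotL v ∘ₗ colMulLinear R A) = rowOf f.1 := by
        rw [rowOf_comp, rowOf_dotL]; exact hv
      have h' := congrArg dotL h
      rw [dotL_rowOf, dotL_rowOf] at h'
      exact h')
  let d₂' : P₂ →ₗ[Rᵐᵒᵖ] LinearMap.ker (colMulLinear R A) := d₂.codRestrict _ hmem
  have hd₂' : Function.Surjective d₂' := fun u => by
    obtain ⟨p, hp⟩ := hlift u
    exact ⟨p, Subtype.ext hp⟩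
  have hd₃ : d₂' ∘ₗ d₃ = 0 := by
    ext1 p
    apply Subtype.ext
    have : d₃ p ∈ LinearMap.ker d₂ := by
      rw [← hr₃]
      exact ⟨p, rfl⟩
    exact this
  let s : ((((Fin n → R) ⧸ LinearMap.range (rowMulLinear R A)) →ₗ[R] R) →ₗ[Rᵐᵒᵖ] R) →+
      coc d₃ R :=
    { toFun := fun ψ => ⟨(ψ ∘ₗ kap A) ∘ₗ d₂', by
        change ((ψ ∘ₗ kap A) ∘ₗ d₂') ∘ₗ d₃ = 0
        rw [LinearMap.comp_assoc, hd₃, LinearMap.comp_zero]⟩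
      map_zero' := rfl
      map_add' := fun _ _ => rfl }
  have hs : Function.Surjective s := by
    intro f
    let K := LinearEquiv.ofBijective (kap A) (kap_bij A)
    have hle : LinearMap.ker d₂' ≤ LinearMap.ker f.1 := by
      intro p hp
      have h1 : d₂ p = 0 := congrArg Subtype.val hp
      have h2 : p ∈ LinearMap.range d₃ := by rw [hr₃]; exact h1
      obtain ⟨w, rfl⟩ := h2
      exact LinearMap.congr_fun (show f.1 ∘ₗ d₃ = 0 from f.2) w
    let E := d₂'.quotKerEquivOfSurjective hd₂'
    let g : LinearMap.ker (colMulLinear R A) →ₗ[Rᵐᵒᵖ] R :=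
      (LinearMap.ker d₂').liftQ f.1 hle ∘ₗ E.symm.toLinearMap
    have hg : ∀ p, g (d₂' p) = f.1 p := by
      intro p
      have : E.symm (d₂' p) = Submodule.Quotient.mk p := by
        rw [LinearEquiv.symm_apply_eq]; rfl
      change (LinearMap.ker d₂').liftQ f.1 hle (E.symm (d₂' p)) = _
      rw [this]; rfl
    refine ⟨g ∘ₗ K.symm.toLinearMap, Subtype.ext (LinearMap.ext fun p => ?_)⟩
    change g (K.symm (K (d₂' p))) = f.1 p
    rw [K.symm_apply_apply, hg]
  refine ⟨ι, q₂.comp s, hι, ?_, ?_, hs₂.comp hs⟩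
  · intro x
    rw [hιr]
    obtain ⟨v, rfl⟩ := Submodule.Quotient.mk_surjective _ x
    constructor
    · intro hx
      refine ⟨⟨dotL v, ?_⟩, ?_⟩
      · refine LinearMap.ext fun p => ?_
        exact LinearMap.congr_fun hx (kap A (d₂' p))
      · change Submodule.Quotient.mk (rowOf (dotL v)) = _
        rw [rowOf_dotL]
    · rintro ⟨f, hf⟩
      rw [← hf]
      refine LinearMap.ext fun φ => ?_
      obtain ⟨u, rfl⟩ := (kap_bij A).2 φ
      obtain ⟨p, rfl⟩ := hd₂' u
      change dotL (rowOf f.1) (d₂ p) = 0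
      rw [dotL_rowOf]
      exact LinearMap.congr_fun (show f.1 ∘ₗ d₂ = 0 from f.2) p
  · intro ψ
    refine (hk₂ (s ψ)).trans ?_
    constructor
    · rintro ⟨y, hy⟩
      refine ⟨Submodule.Quotient.mk (rowOf y), LinearMap.ext fun φ => ?_⟩
      obtain ⟨u, rfl⟩ := (kap_bij A).2 φ
      obtain ⟨p, rfl⟩ := hd₂' u
      change dotL (rowOf y) (d₂ p) = _
      rw [dotL_rowOf]
      exact LinearMap.congr_fun hy p
    · rintro ⟨x, rfl⟩
      obtain ⟨v, rfl⟩ := Submodule.Quotient.mk_surjective _ x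
      exact ⟨dotL v, rfl⟩
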